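/- arXiv:1905.02387 — 2 statements merged into one kernel-verified Lean document; each statement's English description precedes it below -/
import Mathlib

section
/- Let σ ∈ K_n and let 1 ≤ j < i ≤ n. If ∇_j(∇_i(σ)) ∈ K_{n−2} but ∇_i(σ) ∉ K_{n−1} and ∇_j(σ) ∉ K_{n−1}, then there exists an index k such that σ(i) separates σ(j) from σ(k), and there exists an index k′ such that σ(j) separates σ(i) from σ(k′). -/
open Equiv

/-- The Manhattan distance between two elements of `Fin n`. -/
def fdist {n : ℕ} (a b : Fin n) : ℕ := ((a : ℤ) - (b : ℤ)).natAbs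

/-- A king permutation: no two adjacent positions carry adjacent values. -/
def IsKing {n : ℕ} (σ : Equiv.Perm (Fin n)) : Prop :=
  ∀ i j : Fin n, (j : ℕ) = (i : ℕ) + 1 → fdist (σ i) (σ j) ≠ 1

/-- Pattern containment `π ⪯ σ`. -/
def Contains {m n : ℕ} (π : Equiv.Perm (Fin m)) (σ : Equiv.Perm (Fin n)) : Prop :=
  ∃ f : Fin m ↪o Fin n, ∀ a b : Fin m, π a < π b ↔ σ (f a) < σ (f b)

/-- Strict pattern containment `π ≺ σ`. -/
def StrictContains {m n : ℕ} (π : Equiv.Perm (Fin m)) (σ : Equiv.Perm (Fin n)) : Prop :=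
  Contains π σ ∧ m < n

/-- `nabla σ i` deletes the `i`-th entry of `σ` and standardizes. -/
def nabla {n : ℕ} (σ : Equiv.Perm (Fin (n + 1))) (i : Fin (n + 1)) : Equiv.Perm (Fin n) :=
  Equiv.removeNone ((finSuccEquiv' i).symm.trans (σ.trans (finSuccEquiv' (σ i))))

/-- `nablaStar σ a` deletes the value `a` from `σ` and standardizes. -/
def nablaStar {n : ℕ} (σ : Equiv.Perm (Fin (n + 1))) (a : Fin (n + 1)) : Equiv.Perm (Fin n) :=
  nabla σ (σ⁻¹ a)

/-- The permutation [2413] (0-based one-line notation [1,3,0,2]). -/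
def p2413 : Equiv.Perm (Fin 4) :=
  ⟨![1, 3, 0, 2], ![2, 0, 3, 1], by intro x; fin_cases x <;> rfl, by intro x; fin_cases x <;> rfl⟩

/-- The permutation [3142] (0-based one-line notation [2,0,3,1]). -/
def p3142 : Equiv.Perm (Fin 4) :=
  ⟨![2, 0, 3, 1], ![1, 3, 0, 2], by intro x; fin_cases x <;> rfl, by intro x; fin_cases x <;> rfl⟩

/-- `σ i` vertically separates `σ j` from `σ k`. -/
def VSep {n : ℕ} (σ : Equiv.Perm (Fin n)) (i j k : Fin n) : Prop :=
  i ≠ j ∧ i ≠ k ∧ j ≠ k ∧ fdist i j = 1 ∧ fdist i k = 1 ∧ fdist (σ j) (σ k) = 1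

/-- `σ i` horizontally separates `σ j` from `σ k`. -/
def HSep {n : ℕ} (σ : Equiv.Perm (Fin n)) (i j k : Fin n) : Prop :=
  i ≠ j ∧ i ≠ k ∧ j ≠ k ∧ fdist (σ i) (σ j) = 1 ∧ fdist (σ i) (σ k) = 1 ∧ fdist j k = 1

/-- `σ i` separates `σ j` from `σ k`. -/
def Separates {n : ℕ} (σ : Equiv.Perm (Fin n)) (i j k : Fin n) : Prop :=
  VSep σ i j k ∨ HSep σ i j k

/-- `π` has a 2-block at positions `j`, `j+1` (0-based). -/
def HasTwoBlockAt {n : ℕ} (π : Equiv.Perm (Fin n)) (j : ℕ) : Prop :=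
  ∃ hj : j + 1 < n, fdist (π ⟨j, by omega⟩) (π ⟨j + 1, hj⟩) = 1

/-- `π` has a 3-block at positions `p`, `p+1`, `p+2` (0-based). -/
def HasThreeBlockAt {n : ℕ} (π : Equiv.Perm (Fin n)) (p : ℕ) : Prop :=
  ∃ hp : p + 2 < n, ∃ m : ℕ,
    ({(π ⟨p, by omega⟩ : ℕ), (π ⟨p + 1, by omega⟩ : ℕ), (π ⟨p + 2, by omega⟩ : ℕ)} : Finset ℕ)
      = {m, m + 1, m + 2}

/-!
Call two entries of a permutation a *bond* if both their positions and their values are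
consecutive, so that a king permutation is one without bonds. Deleting an entry never separates
neighbours, and it creates a new neighbouring pair only out of the two neighbours of the deleted
point, in position or in value. Hence bonds survive the deletion of a third entry, and
in a king permutation the bonds created by deleting `σ i` are exactly the pairs separated by `σ i`.
If such a pair avoided `σ j`, it would still be a bond in `∇_j(∇_i(σ))`; if `σ j` separated a pair
avoiding `σ i`, it would still separate that pair in `∇_i(σ)`, and deleting `σ j` as well would
create a bond.
-/

/-- A bond of `σ`: a pair of entries that are neighbours both in position and in value. It is the
obstruction to being a king permutation; the two positions may come in either order. -/
def IsBond {n : ℕ} (σ : Equiv.Perm (Fin n)) (a b : Fin n) : Prop :=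
  fdist a b = 1 ∧ fdist (σ a) (σ b) = 1

section Distance

variable {n : ℕ}

lemma fdist_comm (a b : Fin n) : fdist a b = fdist b a := by
  unfold fdist
  omega

lemma ne_of_fdist_eq_one {a b : Fin n} (h : fdist a b = 1) : a ≠ b := by
  rintro rfl
  simp [fdist] at h

lemma fdist_eq_one_iff_succAbove (p : Fin (n + 1)) {u v : Fin n} (huv : u ≠ v) :
    fdist u v = 1 ↔ fdist (p.succAbove u) (p.succAbove v) = 1 ∨
      fdist p (p.succAbove u) = 1 ∧ fdist p (p.succAbove v) = 1 := by
  have val_ne : (u : ℕ) ≠ v := Fin.val_ne_of_ne huv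
  simp only [fdist, Fin.succAbove, Fin.lt_def, Fin.val_castSucc]
  split_ifs <;> simp only [Fin.val_castSucc, Fin.val_succ] <;> omega

lemma fdist_eq_one_of_succAbove (p : Fin (n + 1)) {u v : Fin n}
    (h : fdist (p.succAbove u) (p.succAbove v) = 1) : fdist u v = 1 :=
  have huv : u ≠ v := fun huv ↦ ne_of_fdist_eq_one h (congrArg p.succAbove huv)
  (fdist_eq_one_iff_succAbove p huv).2 (Or.inl h)

end Distance

section Bond

variable {n : ℕ} {σ : Equiv.Perm (Fin n)}

lemma isKing_iff_forall_not_isBond : IsKing σ ↔ ∀ a b, ¬ IsBond σ a b := by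
  refine ⟨fun hσ a b ⟨hpos, hval⟩ ↦ ?_, fun hσ a b hab hval ↦ hσ a b ⟨?_, hval⟩⟩
  · obtain hab | hba : (b : ℕ) = a + 1 ∨ (a : ℕ) = b + 1 := by
      unfold fdist at hpos
      omega
    · exact hσ a b hab hval
    · exact hσ b a hba (fdist_comm (σ a) (σ b) ▸ hval)
  · unfold fdist
    omega

lemma IsKing.not_isBond (hσ : IsKing σ) (a b : Fin n) : ¬ IsBond σ a b :=
  isKing_iff_forall_not_isBond.1 hσ a b

end Bond

section Deletion

variable {n : ℕ} {σ : Equiv.Perm (Fin (n + 1))} {i : Fin (n + 1)} {x y : Fin n}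

lemma succAbove_nabla_apply (σ : Equiv.Perm (Fin (n + 1))) (i : Fin (n + 1)) (x : Fin n) :
    (σ i).succAbove (nabla σ i x) = σ (i.succAbove x) := by
  obtain ⟨y, hy⟩ : ∃ y, (σ i).succAbove y = σ (i.succAbove x) :=
    Fin.exists_succAbove_eq (σ.injective.ne (Fin.succAbove_ne i x))
  have some_nabla : some (nabla σ i x) = some y :=
    (Equiv.removeNone_some _ ⟨y, by simp [← hy]⟩).trans (by simp [← hy])
  rw [Option.some.inj some_nabla, hy]

lemma fdist_nabla_eq_one_iff (hxy : x ≠ y) :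
    fdist (nabla σ i x) (nabla σ i y) = 1 ↔
      fdist (σ (i.succAbove x)) (σ (i.succAbove y)) = 1 ∨
        fdist (σ i) (σ (i.succAbove x)) = 1 ∧ fdist (σ i) (σ (i.succAbove y)) = 1 := by
  simpa only [succAbove_nabla_apply] using
    fdist_eq_one_iff_succAbove (σ i) ((nabla σ i).injective.ne hxy)

lemma fdist_nabla_eq_one (h : fdist (σ (i.succAbove x)) (σ (i.succAbove y)) = 1) :
    fdist (nabla σ i x) (nabla σ i y) = 1 :=
  fdist_eq_one_of_succAbove (σ i) (by simpa only [succAbove_nabla_apply] using h)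

lemma IsBond.isBond_nabla (h : IsBond σ (i.succAbove x) (i.succAbove y)) :
    IsBond (nabla σ i) x y :=
  ⟨fdist_eq_one_of_succAbove i h.1, fdist_nabla_eq_one h.2⟩

end Deletion

section Separation

lemma Separates.symm {n : ℕ} {σ : Equiv.Perm (Fin n)} {i a b : Fin n} (h : Separates σ i a b) :
    Separates σ i b a := by
  rcases h with ⟨hia, hib, hab, ha, hb, hval⟩ | ⟨hia, hib, hab, ha, hb, hpos⟩
  · exact Or.inl ⟨hib, hia, hab.symm, hb, ha, fdist_comm (σ a) (σ b) ▸ hval⟩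
  · exact Or.inr ⟨hib, hia, hab.symm, hb, ha, fdist_comm a b ▸ hpos⟩

lemma Separates.left_ne {n : ℕ} {σ : Equiv.Perm (Fin n)} {i a b : Fin n}
    (h : Separates σ i a b) : a ≠ i :=
  h.elim (fun hv ↦ hv.1.symm) (fun hh ↦ hh.1.symm)

variable {n : ℕ} {σ : Equiv.Perm (Fin (n + 1))} {i : Fin (n + 1)} {j x y : Fin n}

lemma Separates.isBond_nabla (h : Separates σ i (i.succAbove x) (i.succAbove y)) :
    IsBond (nabla σ i) x y := by
  rcases h with ⟨-, -, hxy, hx, hy, hval⟩ | ⟨-, -, hxy, hx, hy, hpos⟩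
  · have x_ne_y : x ≠ y := ne_of_apply_ne i.succAbove hxy
    exact ⟨(fdist_eq_one_iff_succAbove i x_ne_y).2 (Or.inr ⟨hx, hy⟩), fdist_nabla_eq_one hval⟩
  · have x_ne_y : x ≠ y := ne_of_apply_ne i.succAbove hxy
    exact ⟨fdist_eq_one_of_succAbove i hpos, (fdist_nabla_eq_one_iff x_ne_y).2 (Or.inr ⟨hx, hy⟩)⟩

lemma IsBond.separates_of_nabla (hσ : IsKing σ) (h : IsBond (nabla σ i) x y) :
    Separates σ i (i.succAbove x) (i.succAbove y) := by
  obtain ⟨hpos, hval⟩ := h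
  have x_ne_y : x ≠ y := ne_of_fdist_eq_one hpos
  have hix : i ≠ i.succAbove x := Fin.ne_succAbove i x
  have hiy : i ≠ i.succAbove y := Fin.ne_succAbove i y
  have hxy : i.succAbove x ≠ i.succAbove y := Fin.succAbove_right_injective.ne x_ne_y
  rcases (fdist_eq_one_iff_succAbove i x_ne_y).1 hpos with pos | ⟨pos_x, pos_y⟩ <;>
    rcases (fdist_nabla_eq_one_iff x_ne_y).1 hval with val | ⟨val_x, val_y⟩
  · exact (hσ.not_isBond _ _ ⟨pos, val⟩).elim
  · exact Or.inr ⟨hix, hiy, hxy, val_x, val_y, pos⟩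
  · exact Or.inl ⟨hix, hiy, hxy, pos_x, pos_y, val⟩
  · exact (hσ.not_isBond _ _ ⟨pos_x, val_x⟩).elim

lemma IsKing.exists_separates (hσ : IsKing σ) (hi : ¬ IsKing (nabla σ i)) :
    ∃ a b, Separates σ i a b := by
  simp only [isKing_iff_forall_not_isBond, not_forall, not_not] at hi
  obtain ⟨x, y, hbond⟩ := hi
  exact ⟨_, _, hbond.separates_of_nabla hσ⟩

lemma Separates.separates_nabla
    (h : Separates σ (i.succAbove j) (i.succAbove x) (i.succAbove y)) :
    Separates (nabla σ i) j x y := by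
  rcases h with ⟨hjx, hjy, hxy, hx, hy, hval⟩ | ⟨hjx, hjy, hxy, hx, hy, hpos⟩
  · exact Or.inl ⟨ne_of_apply_ne _ hjx, ne_of_apply_ne _ hjy, ne_of_apply_ne _ hxy,
      fdist_eq_one_of_succAbove i hx, fdist_eq_one_of_succAbove i hy, fdist_nabla_eq_one hval⟩
  · exact Or.inr ⟨ne_of_apply_ne _ hjx, ne_of_apply_ne _ hjy, ne_of_apply_ne _ hxy,
      fdist_nabla_eq_one hx, fdist_nabla_eq_one hy, fdist_eq_one_of_succAbove i hpos⟩

end Separation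

section DoubleDeletion

variable {n : ℕ} {σ : Equiv.Perm (Fin (n + 2))} {i a b : Fin (n + 2)} {j : Fin (n + 1)}

lemma exists_succAbove_succAbove_eq (hi : a ≠ i) (hj : a ≠ i.succAbove j) :
    ∃ u, i.succAbove (j.succAbove u) = a := by
  obtain ⟨x, rfl⟩ := Fin.exists_succAbove_eq hi
  obtain ⟨u, rfl⟩ := Fin.exists_succAbove_eq (ne_of_apply_ne i.succAbove hj)
  exact ⟨u, rfl⟩

lemma Separates.eq_succAbove_or_eq_succAbove (h : Separates σ i a b)
    (hking : IsKing (nabla (nabla σ i) j)) :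
    a = i.succAbove j ∨ b = i.succAbove j := by
  by_contra! ⟨haj, hbj⟩
  obtain ⟨u, rfl⟩ := exists_succAbove_succAbove_eq h.left_ne haj
  obtain ⟨v, rfl⟩ := exists_succAbove_succAbove_eq h.symm.left_ne hbj
  exact hking.not_isBond u v h.isBond_nabla.isBond_nabla

lemma Separates.eq_or_eq_of_succAbove (h : Separates σ (i.succAbove j) a b)
    (hking : IsKing (nabla (nabla σ i) j)) : a = i ∨ b = i := by
  by_contra! ⟨hai, hbi⟩
  obtain ⟨u, rfl⟩ := exists_succAbove_succAbove_eq hai h.left_ne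
  obtain ⟨v, rfl⟩ := exists_succAbove_succAbove_eq hbi h.symm.left_ne
  exact hking.not_isBond u v h.separates_nabla.isBond_nabla

theorem separators_of_double_deletion_general (hσ : IsKing σ)
    (hking : IsKing (nabla (nabla σ i) j))
    (hi : ¬ IsKing (nabla σ i)) (hj : ¬ IsKing (nabla σ (i.succAbove j))) :
    (∃ k, Separates σ i (i.succAbove j) k) ∧ (∃ k', Separates σ (i.succAbove j) i k') := by
  constructor
  · obtain ⟨a, b, hab⟩ := hσ.exists_separates hi
    rcases hab.eq_succAbove_or_eq_succAbove hking with rfl | rfl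
    exacts [⟨b, hab⟩, ⟨a, hab.symm⟩]
  · obtain ⟨a, b, hab⟩ := hσ.exists_separates hj
    rcases hab.eq_or_eq_of_succAbove hking with rfl | rfl
    exacts [⟨b, hab⟩, ⟨a, hab.symm⟩]

end DoubleDeletion

/-- if `∇_j(∇_i(σ))` is a king but neither `∇_i(σ)` nor `∇_j(σ)` is,
then `σ i` separates `σ j` from some element and `σ j` separates `σ i` from some element. -/
theorem separators_of_double_deletion (n : ℕ) (σ : Equiv.Perm (Fin (n + 2))) (hσ : IsKing σ)
    (i j : Fin (n + 2)) (hji : (j : ℕ) < (i : ℕ))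
    (h2 : IsKing (nabla (nabla σ i) ⟨(j : ℕ), by have := i.isLt; omega⟩))
    (hi : ¬ IsKing (nabla σ i)) (hj : ¬ IsKing (nabla σ j)) :
    (∃ k, Separates σ i j k) ∧ (∃ k', Separates σ j i k') := by
  have succAbove_eq : i.succAbove ⟨j, by omega⟩ = j :=
    Fin.succAbove_of_castSucc_lt i ⟨j, by omega⟩ hji
  simpa only [succAbove_eq] using
    separators_of_double_deletion_general hσ h2 hi (succAbove_eq.symm ▸ hj)
end

section
/- Let σ be a permutation of length n and suppose σ(i) separates σ(j) from σ(k) where i > j > k. Then ∇_j(∇_i(σ)) = ∇_k(∇_i(σ)). -/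
open Equiv

/-! Once `σ i` is deleted, the two entries it separated are adjacent both in position and in value.
Deleting one rather than the other of two such entries of `τ`, at positions `j` and `k`, changes the
inclusion of the remaining positions by the transposition of `j` and `k`, and the inclusion of the
remaining values by the transposition of `τ j` and `τ k`. As `τ` carries the first transposition to
the second, the two changes cancel. -/

theorem succAbove_nabla {n : ℕ} (σ : Perm (Fin (n + 1))) (i : Fin (n + 1)) (a : Fin n) :
    (σ i).succAbove (nabla σ i a) = σ (i.succAbove a) := by
  obtain ⟨b, hb⟩ := Fin.exists_succAbove_eq (σ.injective.ne (Fin.succAbove_ne i a))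
  have nabla_apply : nabla σ i a = b :=
    Option.some.inj ((removeNone_some _ ⟨b, by simp [← hb]⟩).trans (by simp [← hb]))
  rw [nabla_apply, hb]

section Adjacent

variable {n : ℕ} {p : Fin (n + 1)} {a b : Fin n}

theorem fdist_eq_one_of_fdist_succAbove_eq_one
    (h : fdist (p.succAbove a) (p.succAbove b) = 1) : fdist a b = 1 := by
  unfold fdist Fin.succAbove at *
  split_ifs at h <;> simp only [Fin.lt_def, Fin.val_castSucc, Fin.val_succ] at * <;> omega

theorem fdist_eq_one_of_fdist_self_succAbove_eq_one (hab : a ≠ b)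
    (ha : fdist p (p.succAbove a) = 1) (hb : fdist p (p.succAbove b) = 1) : fdist a b = 1 := by
  rw [Fin.ne_iff_vne] at hab
  unfold fdist Fin.succAbove at *
  split_ifs at ha hb <;> simp only [Fin.lt_def, Fin.val_castSucc, Fin.val_succ] at * <;> omega

end Adjacent

theorem swap_succAbove_of_fdist_eq_one {n : ℕ} {p q : Fin (n + 1)} (h : fdist p q = 1)
    (a : Fin n) : swap p q (p.succAbove a) = q.succAbove a := by
  unfold fdist at h
  rw [swap_apply_def, if_neg (Fin.succAbove_ne p a)]
  unfold Fin.succAbove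
  simp only [Fin.ext_iff, Fin.lt_def]
  split_ifs <;> simp only [Fin.val_castSucc, Fin.val_succ] at * <;> omega

theorem nabla_eq_nabla_of_fdist_eq_one {n : ℕ} {τ : Perm (Fin (n + 1))} {j k : Fin (n + 1)}
    (hpos : fdist j k = 1) (hval : fdist (τ j) (τ k) = 1) : nabla τ j = nabla τ k := by
  ext1 a
  apply Fin.succAbove_right_injective (p := τ k)
  calc (τ k).succAbove (nabla τ j a)
      = swap (τ j) (τ k) ((τ j).succAbove (nabla τ j a)) :=
        (swap_succAbove_of_fdist_eq_one hval _).symm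
    _ = swap (τ j) (τ k) (τ (j.succAbove a)) := by rw [succAbove_nabla]
    _ = τ (swap j k (j.succAbove a)) := τ.injective.swap_apply j k _
    _ = τ (k.succAbove a) := by rw [swap_succAbove_of_fdist_eq_one hpos]
    _ = (τ k).succAbove (nabla τ k a) := (succAbove_nabla τ k a).symm

theorem nabla_separator_left_general {n : ℕ} {σ : Perm (Fin (n + 2))} {i : Fin (n + 2)}
    {j k : Fin (n + 1)} (hsep : Separates σ i (i.succAbove j) (i.succAbove k)) :
    nabla (nabla σ i) j = nabla (nabla σ i) k := by
  unfold Separates VSep HSep at hsep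
  simp only [← succAbove_nabla] at hsep
  rcases hsep with ⟨-, -, hjk, hij, hik, hval⟩ | ⟨-, -, hjk, hij, hik, hpos⟩
  · exact nabla_eq_nabla_of_fdist_eq_one
      (fdist_eq_one_of_fdist_self_succAbove_eq_one (ne_of_apply_ne _ hjk) hij hik)
      (fdist_eq_one_of_fdist_succAbove_eq_one hval)
  · have hjk_val : nabla σ i j ≠ nabla σ i k := (nabla σ i).injective.ne (ne_of_apply_ne _ hjk)
    exact nabla_eq_nabla_of_fdist_eq_one (fdist_eq_one_of_fdist_succAbove_eq_one hpos)
      (fdist_eq_one_of_fdist_self_succAbove_eq_one hjk_val hij hik)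

/-- if `σ i` separates `σ j` from `σ k` with `i > j > k`,
then `∇_j(∇_i(σ)) = ∇_k(∇_i(σ))`. -/
theorem nabla_separator_left (n : ℕ) (σ : Equiv.Perm (Fin (n + 2))) (i j k : Fin (n + 2))
    (hkj : (k : ℕ) < (j : ℕ)) (hji : (j : ℕ) < (i : ℕ)) (hsep : Separates σ i j k) :
    nabla (nabla σ i) ⟨(j : ℕ), by have := i.isLt; omega⟩
      = nabla (nabla σ i) ⟨(k : ℕ), by have := i.isLt; omega⟩ := by
  apply nabla_separator_left_general (j := j.castPred (Fin.ne_last_of_lt hji))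
    (k := k.castPred (Fin.ne_last_of_lt (hkj.trans hji)))
  rwa [Fin.succAbove_castPred_of_lt i j hji, Fin.succAbove_castPred_of_lt i k (hkj.trans hji)]
end
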